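/- Let d ≥ 2 and λ ∈ [0,1). Define V : H₊ → ℝ by V(x) = F(T x) − F(x*). Then there exists a continuous function α : [0,∞) → [0,∞) with α(t) = 0 if and only if t = 0 (i.e., continuous and positive definite) such that V(T x) ≤ V(x) − α(V(x)) for every x ∈ H₊. -/

import Mathlib

noncomputable section

open Metric Set Filter

/-- Euclidean space `ℝ^d` with `d = d' + 2 ≥ 2`. -/
abbrev Euc (d : ℕ) := EuclideanSpace ℝ (Fin (d + 2))

/-- The standard basis vectors. -/
def e (d : ℕ) (j : Fin (d + 2)) : Euc d := EuclideanSpace.single j 1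

/-- The Douglas–Rachford operator for the unit sphere and the line
`L_λ = {t e₁ + λ e₂}`, given by its explicit formula
`T x = (x₁/‖x‖) e₁ + ((1 − 1/‖x‖) x₂ + λ) e₂ + (1 − 1/‖x‖) ∑_{j=3}^d x_j e_j`. -/
def DR (d : ℕ) (lam : ℝ) (x : Euc d) : Euc d :=
  (x 0 / ‖x‖) • e d 0 + ((1 - 1 / ‖x‖) * x 1 + lam) • e d 1 +
    ∑ j ∈ Finset.univ.filter (fun j : Fin (d + 2) => 2 ≤ (j : ℕ)),
      ((1 - 1 / ‖x‖) * x j) • e d j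

/-- The intersection point `x* = √(1−λ²) e₁ + λ e₂`. -/
def xStar (d : ℕ) (lam : ℝ) : Euc d := Real.sqrt (1 - lam ^ 2) • e d 0 + lam • e d 1

/-- The Lyapunov-type function of Benoist:
`F(x) = ½‖x − λe₂‖² − λ log(1 + √(1 − x₁²)) + λ√(1 − x₁²) + (λ−1) log x₁`. -/
def F (d : ℕ) (lam : ℝ) (x : Euc d) : ℝ :=
  (1 / 2) * ‖x - lam • e d 1‖ ^ 2 - lam * Real.log (1 + Real.sqrt (1 - (x 0) ^ 2)) +
    lam * Real.sqrt (1 - (x 0) ^ 2) + (lam - 1) * Real.log (x 0)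

/-- `Δ = {x : 0 < x₁ ≤ 1}`. -/
def Delta (d : ℕ) : Set (Euc d) := {x | 0 < x 0 ∧ x 0 ≤ 1}

/-- `H₊ = {x : x₁ > 0}`. -/
def Hplus (d : ℕ) : Set (Euc d) := {x | 0 < x 0}

/-- `V(x) = F(T x) − F(x*)` on `H₊`. -/
def V (d : ℕ) (lam : ℝ) (x : Euc d) : ℝ := F d lam (DR d lam x) - F d lam (xStar d lam)

def Gf (l c : ℝ) : ℝ := (1 - c ^ 2) / 2 - l * Real.log (1 + c) + l * c + (l - 1) / 2 * Real.log (1 - c ^ 2)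

def kf (c : ℝ) : ℝ := c / √(1 - c ^ 2)

def Wf (l σ c : ℝ) : ℝ := Gf l c - Gf l σ + kf σ * (σ - l) * (√(1 - c ^ 2) - √(1 - σ ^ 2))

lemma kf_nonneg {c : ℝ} (h : 0 ≤ c) : 0 ≤ kf c := div_nonneg h (Real.sqrt_nonneg _)

lemma one_sub_sq_pos {c : ℝ} (h : 0 ≤ c) (h' : c < 1) : 0 < 1 - c ^ 2 := by nlinarith

lemma kf_pos {c : ℝ} (h : 0 < c) (h' : c < 1) : 0 < kf c :=
  div_pos h (Real.sqrt_pos.2 (one_sub_sq_pos h.le h'))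

lemma kf_mono {c c' : ℝ} (h : 0 ≤ c) (hc : c ≤ c') (h' : c' < 1) : kf c ≤ kf c' := by
  unfold kf
  have := Real.sqrt_pos.2 (one_sub_sq_pos (h.trans hc) h')
  apply div_le_div₀ (h.trans hc) hc this
  apply Real.sqrt_le_sqrt; nlinarith

lemma kf_sq {c : ℝ} (h : 0 ≤ c) (h' : c < 1) : kf c ^ 2 = c ^ 2 / (1 - c ^ 2) := by
  unfold kf
  rw [div_pow, Real.sq_sqrt (one_sub_sq_pos h h').le]

lemma hasDerivAt_S {c : ℝ} (h : 0 ≤ c) (h' : c < 1) :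
    HasDerivAt (fun c : ℝ => √(1 - c ^ 2)) (- kf c) c := by
  have h1 := one_sub_sq_pos h h'
  have h2 : HasDerivAt (fun c : ℝ => 1 - c ^ 2) (-(2 * c)) c := by
    simpa using ((hasDerivAt_id c).pow 2).const_sub 1
  convert h2.sqrt h1.ne' using 1
  unfold kf
  have := (Real.sqrt_pos.2 h1).ne'
  field_simp

lemma hasDerivAt_G (l : ℝ) {c : ℝ} (h : 0 ≤ c) (h' : c < 1) :
    HasDerivAt (Gf l) (kf c ^ 2 * (c - l)) c := by
  have h1 := one_sub_sq_pos h h'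
  have h2 : HasDerivAt (fun c : ℝ => 1 - c ^ 2) (-(2 * c)) c := by
    simpa using ((hasDerivAt_id c).pow 2).const_sub 1
  have h3 : HasDerivAt (fun c : ℝ => 1 + c) 1 c := (hasDerivAt_id c).const_add 1
  have h4 := (((h2.div_const 2).sub ((h3.log (by linarith)).const_mul l)).add
    ((hasDerivAt_id c).const_mul l)).add ((h2.log h1.ne').const_mul ((l - 1) / 2))
  refine HasDerivAt.congr_deriv (f := Gf l) h4 ?_
  rw [kf_sq h h']
  have h5 : (1 + c) ≠ 0 := by linarith
  have h6 : (1 - c) ≠ 0 := by linarith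
  have h7 : 1 - c ^ 2 = (1 - c) * (1 + c) := by ring
  rw [h7]
  field_simp
  ring

lemma hasDerivAt_W (l σ : ℝ) {c : ℝ} (h : 0 ≤ c) (h' : c < 1) :
    HasDerivAt (Wf l σ) (kf c * (kf c * (c - l) - kf σ * (σ - l))) c := by
  have := ((hasDerivAt_G l h h').sub_const (Gf l σ)).add
    (((hasDerivAt_S h h').sub_const (√(1 - σ ^ 2))).const_mul (kf σ * (σ - l)))
  refine HasDerivAt.congr_deriv (f := Wf l σ) this ?_
  ring

lemma W_self (l σ : ℝ) : Wf l σ σ = 0 := by unfold Wf; ring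

/-- comparison lemma -/
lemma le_of_der {f f' : ℝ → ℝ} {a b : ℝ} (hab : a ≤ b)
    (hd : ∀ x, a ≤ x → x ≤ b → HasDerivAt f (f' x) x)
    (hp : ∀ x, a ≤ x → x ≤ b → 0 ≤ f' x) : f a ≤ f b := by
  have : MonotoneOn f (Icc a b) := by
    apply monotoneOn_of_deriv_nonneg (convex_Icc a b)
    · intro x hx; exact (hd x hx.1 hx.2).continuousAt.continuousWithinAt
    · intro x hx; rw [interior_Icc] at hx
      exact (hd x hx.1.le hx.2.le).differentiableAt.differentiableWithinAt
    · intro x hx; rw [interior_Icc] at hx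
      rw [(hd x hx.1.le hx.2.le).deriv]; exact hp x hx.1.le hx.2.le
  exact this (left_mem_Icc.2 hab) (right_mem_Icc.2 hab) hab

lemma lt_of_der {f f' : ℝ → ℝ} {a b : ℝ} (hab : a < b)
    (hd : ∀ x, a ≤ x → x ≤ b → HasDerivAt f (f' x) x)
    (hp : ∀ x, a < x → x < b → 0 < f' x) : f a < f b := by
  have : StrictMonoOn f (Icc a b) := by
    apply strictMonoOn_of_deriv_pos (convex_Icc a b)
    · intro x hx; exact (hd x hx.1 hx.2).continuousAt.continuousWithinAt
    · intro x hx; rw [interior_Icc] at hx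
      rw [(hd x hx.1.le hx.2.le).deriv]; exact hp x hx.1 hx.2
  exact this (left_mem_Icc.2 hab.le) (right_mem_Icc.2 hab.le) hab

/-- Case 1. -/
lemma case1 {l σ C : ℝ} (h0 : 0 ≤ l) (hl : l ≤ σ) (hσ : σ < 1) (hC : 0 ≤ C) (hC1 : C < 1) :
    0 ≤ Wf l σ C := by
  rw [← W_self l σ]
  rcases le_total σ C with h | h
  · refine le_of_der h (fun x hx hx' => hasDerivAt_W l σ (by linarith) (by linarith)) ?_
    intro x hx hx'
    apply mul_nonneg (kf_nonneg (by linarith))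
    have := mul_le_mul (kf_mono (c := σ) (c' := x) (by linarith) hx (by linarith))
      (show σ - l ≤ x - l by linarith) (by linarith) (kf_nonneg (by linarith))
    linarith
  · have := le_of_der (f := fun x => - Wf l σ x) h
      (fun x hx hx' => (hasDerivAt_W l σ (by linarith) (by linarith)).neg) ?_
    · linarith
    intro x hx hx'
    rw [← mul_neg]
    apply mul_nonneg (kf_nonneg (by linarith))
    rcases le_total x l with h3 | h3
    · have h4 := mul_nonneg (kf_nonneg (c := x) (by linarith)) (show 0 ≤ l - x by linarith)
      have h5 := mul_nonneg (kf_nonneg (c := σ) (by linarith)) (show 0 ≤ σ - l by linarith)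
      nlinarith
    · have := mul_le_mul (kf_mono (c := x) (c' := σ) (by linarith) hx' (by linarith))
        (show x - l ≤ σ - l by linarith) (by linarith) (kf_nonneg (by linarith))
      linarith

lemma case1' {l C : ℝ} (h0 : 0 ≤ l) (hl : l < 1) (hC : 0 ≤ C) (hC1 : C < 1) (hne : C ≠ l) :
    0 < Wf l l C := by
  rw [← W_self l l]
  rcases lt_or_gt_of_ne hne with h | h
  · have := lt_of_der (f := fun x => - Wf l l x) h
      (fun x hx hx' => (hasDerivAt_W l l (by linarith) (by linarith)).neg) ?_
    · linarith
    intro x hx hx'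
    have := kf_pos (c := x) (by linarith) (by linarith)
    have h2 := mul_pos (mul_pos this this) (sub_pos.2 hx')
    nlinarith
  · refine lt_of_der h (fun x hx hx' => hasDerivAt_W l l (by linarith) (by linarith)) ?_
    intro x hx hx'
    have := kf_pos (c := x) (by linarith) (by linarith)
    have h2 := mul_pos (mul_pos this this) (sub_pos.2 hx)
    nlinarith

lemma kk {σ c : ℝ} (h : 0 ≤ σ) (hc : σ ≤ c) (h1 : c < 1) : c * σ / (1 - σ ^ 2) ≤ kf c * kf σ := by
  have hs := one_sub_sq_pos h (by linarith)
  have h2 : kf c * kf σ = c * σ / (√(1 - c ^ 2) * √(1 - σ ^ 2)) := by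
    unfold kf; rw [div_mul_div_comm]
  rw [h2]
  have h3 := Real.sqrt_pos.2 (one_sub_sq_pos (h.trans hc) h1)
  have h4 := Real.sqrt_pos.2 hs
  apply div_le_div_of_nonneg_left (mul_nonneg (by linarith) h) (by positivity)
  have h5 : √(1 - c ^ 2) ≤ √(1 - σ ^ 2) := by apply Real.sqrt_le_sqrt; nlinarith
  have := Real.mul_self_sqrt hs.le
  nlinarith

/-- Case 2. -/
lemma case2 {l σ C : ℝ} (h0 : 0 ≤ σ) (hl : σ < l) (h1 : l < 1) (hC : σ ≤ C) (hC1 : C < 1) :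
    -(1 / 4) * (l - σ) ^ 2 ≤ Wf l σ C := by
  have key : ∀ D, σ ≤ D → D ≤ l → -(1 / 4) * (l - σ) ^ 2 ≤ Wf l σ D := by
    intro D hD hD'
    have := le_of_der (f := fun x => Wf l σ x + (x - σ) ^ 2 / 4) hD
      (f' := fun x => kf x * (kf x * (x - l) - kf σ * (σ - l)) + (x - σ) / 2) ?_ ?_
    · simp only [W_self] at this
      nlinarith
    · intro x hx hx'
      refine ((hasDerivAt_W l σ (by linarith) (by linarith)).add
        ((((hasDerivAt_id x).sub_const σ).pow 2).div_const 4)).congr_deriv ?_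
      simp; ring
    · intro x hx hx'
      have e1 : kf x * (kf x * (x - l) - kf σ * (σ - l)) =
        - (kf x ^ 2 * (l - x)) + kf x * kf σ * (l - σ) := by ring
      rw [e1]
      have a1 := kf_sq (c := x) (by linarith) (by linarith)
      have a2 := kk h0 hx (by linarith)
      have a3 := kf_mono (c := σ) (c' := x) h0 hx (by linarith)
      have a4 := kf_nonneg (c := x) (by linarith)
      -- linear in l, worst at l = 1
      have a5 : kf x ^ 2 * (l - x) - kf x * kf σ * (l - σ) ≤
          kf x ^ 2 * (1 - x) - kf x * kf σ * (1 - σ) := by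
        have : 0 ≤ (kf x * (kf x - kf σ)) * (1 - l) :=
          mul_nonneg (mul_nonneg a4 (by linarith)) (by linarith)
        nlinarith
      have a6 : kf x ^ 2 * (1 - x) - kf x * kf σ * (1 - σ) ≤
          x ^ 2 / (1 - x ^ 2) * (1 - x) - x * σ / (1 - σ ^ 2) * (1 - σ) := by
        rw [a1]
        have := mul_le_mul_of_nonneg_right a2 (show 0 ≤ 1 - σ by linarith)
        linarith
      have a7 : x ^ 2 / (1 - x ^ 2) * (1 - x) - x * σ / (1 - σ ^ 2) * (1 - σ) =
          x * (x - σ) / ((1 + x) * (1 + σ)) := by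
        have b1 : 1 - x ≠ 0 := by linarith
        have b2 : 1 - σ ≠ 0 := by linarith
        have b3 : 1 + x ≠ 0 := by linarith
        have b4 : 1 + σ ≠ 0 := by linarith
        rw [show 1 - x ^ 2 = (1 - x) * (1 + x) by ring, show 1 - σ ^ 2 = (1 - σ) * (1 + σ) by ring]
        field_simp
        ring
      have a8 : x * (x - σ) / ((1 + x) * (1 + σ)) ≤ (x - σ) / 2 := by
        have hx0 : 0 ≤ x := by linarith
        rw [div_le_iff₀ (by positivity)]
        nlinarith [mul_nonneg (sub_nonneg.2 hx) (show 0 ≤ 1 - x by linarith),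
          mul_nonneg (sub_nonneg.2 hx) h0, mul_nonneg (mul_nonneg (sub_nonneg.2 hx) h0) hx0]
      linarith
  rcases le_total C l with h | h
  · exact key C hC h
  · refine (key l hl.le le_rfl).trans ?_
    refine le_of_der h (fun x hx hx' => hasDerivAt_W l σ (by linarith) (by linarith)) ?_
    intro x hx hx'
    apply mul_nonneg (kf_nonneg (by linarith))
    have h4 := mul_nonneg (kf_nonneg (c := x) (by linarith)) (show 0 ≤ x - l by linarith)
    have h5 := mul_nonneg (kf_nonneg (c := σ) (by linarith)) (show 0 ≤ l - σ by linarith)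
    nlinarith

/-- Hölder type estimate. -/
lemma holder {σ c : ℝ} (h0 : 0 < σ) (h1 : σ ≤ 4 / 5) (hc : 0 ≤ c) (hcσ : c ≤ σ) :
    (kf σ - kf c) ^ 2 ≤ 19 / 10 / σ * (σ - c) := by
  obtain ⟨t, rfl⟩ : ∃ t, c = σ * t := ⟨c / σ, by field_simp⟩
  have ht0 : 0 ≤ t := by
    by_contra h; push Not at h; nlinarith
  have ht1 : t ≤ 1 := by
    by_contra h; push Not at h; nlinarith
  have p2 := Real.sq_sqrt (show (0:ℝ) ≤ 1 - σ ^ 2 by nlinarith)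
  have u2 := Real.sq_sqrt (show (0:ℝ) ≤ 1 - (σ * t) ^ 2 by nlinarith)
  have hp : 3 / 5 ≤ √(1 - σ ^ 2) := by apply Real.le_sqrt_of_sq_le; nlinarith
  have hw : σ ^ 2 ≤ 16 / 25 := by nlinarith
  have hw0 : 0 ≤ σ ^ 2 := sq_nonneg _
  have t2 : t ^ 2 ≤ 1 := by nlinarith
  have t20 : 0 ≤ t ^ 2 := sq_nonneg _
  have hu : 1 - 2 / 5 * t ^ 2 ≤ √(1 - (σ * t) ^ 2) := by
    apply Real.le_sqrt_of_sq_le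
    have : (σ * t) ^ 2 ≤ 16 / 25 * t ^ 2 := by rw [mul_pow]; exact mul_le_mul_of_nonneg_right hw t20
    nlinarith
  unfold kf
  set p := √(1 - σ ^ 2)
  set u := √(1 - (σ * t) ^ 2)
  have hp0 : 0 < p := by linarith
  have hu0 : 0 < u := by nlinarith
  have hden : 0 < σ * u + σ * t * p := by positivity
  have e1 : σ / p - σ * t / u = σ * (1 - t) * (1 + t) / (p * u * (u + t * p)) := by
    have : u + t * p ≠ 0 := by positivity
    field_simp
    have : u ^ 2 - t ^ 2 * p ^ 2 = 1 - t ^ 2 := by rw [p2, u2]; ring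
    linear_combination this
  rw [e1, div_pow, div_le_iff₀ (by positivity)]
  have e2 : 19 / 10 / σ * (σ - σ * t) = 19 / 10 * (1 - t) := by field_simp
  rw [e2]
  have e3 : (p * u * (u + t * p)) ^ 2 = p ^ 2 * u ^ 2 * (u ^ 2 + t ^ 2 * p ^ 2 + 2 * t * (p * u)) := by ring
  rw [e3, p2, u2]
  have pu : 3 / 5 * (1 - 2 / 5 * t ^ 2) ≤ p * u :=
    mul_le_mul hp hu (by nlinarith) hp0.le
  have f1 : 9 / 25 ≤ 1 - σ ^ 2 := by linarith
  have f2' : (σ * t) ^ 2 ≤ 16 / 25 * t ^ 2 := by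
    rw [mul_pow]; exact mul_le_mul_of_nonneg_right hw t20
  have f2 : 1 - 16 / 25 * t ^ 2 ≤ 1 - (σ * t) ^ 2 := by linarith
  have f3 : 1 - 7 / 25 * t ^ 2 + 6 / 5 * t * (1 - 2 / 5 * t ^ 2) ≤
      1 - (σ * t) ^ 2 + t ^ 2 * (1 - σ ^ 2) + 2 * t * (p * u) := by
    have := mul_le_mul_of_nonneg_left pu ht0
    nlinarith
  have f4 : 0 ≤ 1 - 16 / 25 * t ^ 2 := by linarith
  have f5 : 0 ≤ 1 - 7 / 25 * t ^ 2 + 6 / 5 * t * (1 - 2 / 5 * t ^ 2) := by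
    have : 0 ≤ t * (1 - 2 / 5 * t ^ 2) := mul_nonneg ht0 (by linarith)
    nlinarith
  have f6 := mul_le_mul (mul_le_mul f1 f2 f4 (by linarith)) f3 f5
    (mul_nonneg (by linarith) (by linarith))
  have f7 : 16 / 25 * ((1 - t) * (1 + t) ^ 2) ≤ 19 / 10 * (9 / 25 * (1 - 16 / 25 * t ^ 2) *
      (1 - 7 / 25 * t ^ 2 + 6 / 5 * t * (1 - 2 / 5 * t ^ 2))) := by
    nlinarith [mul_nonneg ht0 (sub_nonneg.2 ht1), mul_nonneg t20 (sub_nonneg.2 ht1),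
      mul_nonneg (mul_nonneg ht0 t20) (sub_nonneg.2 ht1),
      mul_nonneg (mul_nonneg t20 t20) (sub_nonneg.2 ht1), mul_nonneg ht0 t20, mul_nonneg t20 t20]
  have f8 : σ ^ 2 * ((1 - t) * (1 + t) ^ 2) ≤ 16 / 25 * ((1 - t) * (1 + t) ^ 2) :=
    mul_le_mul_of_nonneg_right hw (mul_nonneg (by linarith) (sq_nonneg _))
  have f9 := mul_le_mul_of_nonneg_left (f8.trans (f7.trans (mul_le_mul_of_nonneg_left f6
    (show (0:ℝ) ≤ 19 / 10 by norm_num)))) (sub_nonneg.2 ht1)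
  linarith

/-- Case 3. -/
lemma case3 {l σ C : ℝ} (h0 : 0 < σ) (hs : σ ≤ 4 / 5) (hl : σ < l) (hC : 0 ≤ C)
    (hC1 : C < σ) : -(19 / 40) * (l - σ) ^ 2 ≤ Wf l σ C := by
  have := le_of_der (f := fun x => 19 / 40 * (l - σ) ^ 2 / σ * x - Wf l σ x) hC1.le
      (f' := fun x => 19 / 40 * (l - σ) ^ 2 / σ - kf x * (kf x * (x - l) - kf σ * (σ - l))) ?_ ?_
  · simp only [W_self] at this
    have e1 : 19 / 40 * (l - σ) ^ 2 / σ * σ = 19 / 40 * (l - σ) ^ 2 := by field_simp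
    have e2 : 0 ≤ 19 / 40 * (l - σ) ^ 2 / σ * C := by positivity
    linarith
  · intro x hx hx'
    refine (((hasDerivAt_id x).const_mul (19 / 40 * (l - σ) ^ 2 / σ)).sub
      (hasDerivAt_W l σ (by linarith) (by linarith))).congr_deriv ?_
    simp
  · intro x hx hx'
    rcases eq_or_lt_of_le hx' with rfl | hlt
    · have : 0 ≤ 19 / 40 * (l - x) ^ 2 / x := by positivity
      simpa using this
    have a1 := holder h0 hs (hC.trans hx) hx'
    set k := kf x
    set K := kf σ
    set m := l - σ with hm
    set δ := σ - x with hd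
    have hδ : 0 < δ := by linarith
    have e1 : k * (k * (x - l) - K * (σ - l)) = m * k * (K - k) - k ^ 2 * δ := by
      rw [hm, hd]; ring
    rw [e1]
    have e2 : 0 ≤ (k * δ - m * (K - k) / 2) ^ 2 := sq_nonneg _
    have e3 := mul_le_mul_of_nonneg_left a1 (sq_nonneg m)
    have e4 : m ^ 2 * (19 / 10 / σ * δ) = 4 * (19 / 40 * m ^ 2 / σ) * δ := by ring
    rw [e4] at e3
    have : 0 ≤ (19 / 40 * m ^ 2 / σ - (m * k * (K - k) - k ^ 2 * δ)) * δ := by nlinarith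
    exact nonneg_of_mul_nonneg_left this hδ

lemma case4a {C : ℝ} (hC : 0 ≤ C) (hC1 : C ≤ 4 / 5) : 0 ≤ Wf 1 (4 / 5) C := by
  have k45 : kf (4 / 5) = 4 / 3 := by
    unfold kf
    rw [show (1 - (4 / 5 : ℝ) ^ 2) = (3 / 5) ^ 2 by norm_num, Real.sqrt_sq (by norm_num)]; norm_num
  -- comparison of squares
  have cub : ∀ x : ℝ, 0 ≤ x → x ≤ 4 / 5 → (kf x * (1 - x)) ^ 2 - (4 / 15) ^ 2 =
      (4 / 5 - x) * (225 * x ^ 2 - 45 * x - 20) / (225 * (1 + x)) := by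
    intro x hx hx'
    rw [mul_pow, kf_sq hx (by linarith), show 1 - x ^ 2 = (1 - x) * (1 + x) by ring]
    have b1 : 1 - x ≠ 0 := by linarith
    have b3 : 1 + x ≠ 0 := by linarith
    field_simp
    ring
  rcases le_total (225 * C ^ 2 - 45 * C - 20) 0 with h | h
  · have h0 : 0 ≤ Wf 1 (4 / 5) 0 := by
      unfold Wf Gf
      rw [k45]
      rw [show (1 - (4 / 5 : ℝ) ^ 2) = (3 / 5) ^ 2 by norm_num, Real.sqrt_sq (by norm_num)]
      norm_num
      have : (0.5868 : ℝ) ≤ Real.log (9 / 5) := by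
        rw [Real.le_log_iff_exp_le (by norm_num)]
        have := Real.exp_bound' (x := 0.5868) (by norm_num) (by norm_num) (n := 7) (by norm_num)
        refine this.trans ?_
        norm_num [Finset.sum_range_succ, Nat.factorial]
      linarith
    refine h0.trans ?_
    refine le_of_der hC (fun x hx hx' => hasDerivAt_W 1 (4/5) (by linarith) (by linarith)) ?_
    intro x hx hx'
    apply mul_nonneg (kf_nonneg (by linarith))
    have c1 := cub x hx (by linarith)
    have c2 : (4 / 5 - x) * (225 * x ^ 2 - 45 * x - 20) / (225 * (1 + x)) ≤ 0 := by
      apply div_nonpos_of_nonpos_of_nonneg _ (by linarith)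
      apply mul_nonpos_of_nonneg_of_nonpos (by linarith)
      by_contra hh; push Not at hh
      have hx5 : 1 / 5 < x := by
        by_contra h5; push Not at h5; nlinarith
      nlinarith [mul_nonneg (sub_nonneg.2 hx') (show 0 ≤ 225 * (C + x) - 45 by linarith)]
    have c3 : kf x * (1 - x) ≤ 4 / 15 := by
      apply le_of_sq_le_sq _ (by norm_num)
      linarith
    rw [k45]; linarith
  · rw [← W_self 1 (4/5)]
    have := le_of_der (f := fun x => - Wf 1 (4/5) x) hC1
      (fun x hx hx' => (hasDerivAt_W 1 (4/5) (by linarith) (by linarith)).neg) ?_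
    · linarith
    intro x hx hx'
    rw [← mul_neg]
    have hk := kf_nonneg (c := x) (by linarith)
    apply mul_nonneg hk
    have c1 := cub x (by linarith) (by linarith)
    have c2 : 0 ≤ (4 / 5 - x) * (225 * x ^ 2 - 45 * x - 20) / (225 * (1 + x)) := by
      apply div_nonneg _ (by linarith)
      apply mul_nonneg (by linarith)
      have hx5 : 1 / 5 < C := by
        by_contra h5; push Not at h5; nlinarith
      nlinarith [mul_nonneg (sub_nonneg.2 hx) (show 0 ≤ 225 * (C + x) - 45 by linarith)]
    have c3 : 4 / 15 ≤ kf x * (1 - x) := by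
      apply le_of_sq_le_sq _ (mul_nonneg hk (by linarith))
      linarith
    rw [k45]; linarith

lemma hasDerivAt_k {c : ℝ} (h : 0 ≤ c) (h' : c < 1) :
    HasDerivAt kf (1 / (√(1 - c ^ 2)) ^ 3) c := by
  have h1 := one_sub_sq_pos h h'
  have h2 := (Real.sqrt_pos.2 h1)
  refine HasDerivAt.congr_deriv (f := kf) ((hasDerivAt_id c).div (hasDerivAt_S h h') h2.ne') ?_
  unfold kf
  simp only [id]
  have h3 := Real.sq_sqrt h1.le
  field_simp
  rw [h3]; ring

lemma case4b {σ C : ℝ} (hσ : 4 / 5 ≤ σ) (hσ1 : σ < 1) (hC : 0 ≤ C) (hC1 : C ≤ σ) :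
    0 ≤ Wf 1 σ C := by
  have mono : ∀ a, 4 / 5 ≤ a → C ≤ a → a ≤ σ → Wf 1 a C ≤ Wf 1 σ C := by
    intro a ha hCa haσ
    refine le_of_der (f := fun s => Wf 1 s C) (f' := fun s =>
      (1 / (√(1 - s ^ 2)) ^ 3 * (s - 1) + kf s) * (√(1 - C ^ 2) - √(1 - s ^ 2))) haσ ?_ ?_
    · intro x hx hx'
      have d1 := hasDerivAt_k (c := x) (by linarith) (by linarith)
      have d2 := hasDerivAt_S (c := x) (by linarith) (by linarith)
      have d3 := hasDerivAt_G 1 (c := x) (by linarith) (by linarith)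
      have d4 := (d3.const_sub (Gf 1 C)).add
        ((d1.mul ((hasDerivAt_id x).sub_const 1)).mul (d2.const_sub (√(1 - C ^ 2))))
      refine HasDerivAt.congr_deriv (f := fun s => Wf 1 s C) d4 ?_
      simp only [id, Pi.mul_apply]
      ring
    · intro x hx hx'
      have h1 := one_sub_sq_pos (c := x) (by linarith) (by linarith)
      have h2 := (Real.sqrt_pos.2 h1)
      have h3 := Real.sq_sqrt h1.le
      apply mul_nonneg
      · have : 1 / (√(1 - x ^ 2)) ^ 3 * (x - 1) + kf x = (x - 1 + x * (1 - x ^ 2)) / (√(1 - x ^ 2)) ^ 3 := by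
          unfold kf
          rw [← h3]
          simp only [Real.sqrt_sq h2.le]
          field_simp
        rw [this]
        apply div_nonneg _ (by positivity)
        nlinarith
      · rw [sub_nonneg]; apply Real.sqrt_le_sqrt; nlinarith
  rcases le_total C (4 / 5) with h | h
  · exact (case4a hC h).trans (mono _ le_rfl h hσ)
  · exact (W_self 1 C).ge.trans (mono C h le_rfl hC1)

lemma case4 {l σ C : ℝ} (hσ : 4 / 5 ≤ σ) (hl : σ < l) (h1 : l < 1) (hC : 0 ≤ C) (hC1 : C < σ) :
    0 ≤ Wf l σ C := by
  have a1 := case4b hσ (by linarith) hC hC1.le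
  have a2 := case1 (l := σ) (σ := σ) (C := C) (by linarith) le_rfl (by linarith) hC (by linarith)
  have : (1 - σ) * Wf l σ C = (l - σ) * Wf 1 σ C + (1 - l) * Wf σ σ C := by
    unfold Wf Gf; ring
  have h3 : 0 ≤ (1 - σ) * Wf l σ C := by
    rw [this]
    exact add_nonneg (mul_nonneg (by linarith) a1) (mul_nonneg (by linarith) a2)
  exact nonneg_of_mul_nonneg_right h3 (by linarith)

lemma core {l σ C : ℝ} (h0 : 0 ≤ l) (h1 : l < 1) (hσ : 0 ≤ σ) (hσ1 : σ < 1) (hC : 0 ≤ C)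
    (hC1 : C < 1) : 0 < (σ - l) ^ 2 / 2 + Wf l σ C ∨ (σ = l ∧ C = l) := by
  rcases lt_trichotomy σ l with h | h | h
  · left
    have hp : 0 < (σ - l) ^ 2 := by have := sub_neg.2 h; nlinarith
    have hp' : (l - σ) ^ 2 = (σ - l) ^ 2 := by ring
    rcases le_or_gt σ C with h2 | h2
    · have := case2 hσ h h1 h2 hC1
      linarith
    · rcases le_total σ (4 / 5) with h3 | h3
      · have := case3 (by linarith) h3 h hC h2
        linarith
      · have := case4 h3 h h1 hC h2
        linarith
  · subst h
    by_cases hne : C = σ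
    · right; exact ⟨rfl, hne⟩
    · left; have := case1' hσ hσ1 hC hC1 hne
      simpa using this
  · left
    have := case1 h0 h.le hσ1 hC hC1
    have hp : 0 < (σ - l) ^ 2 := by have := sub_pos.2 h; nlinarith
    linarith

lemma DR_apply (d : ℕ) (l : ℝ) (y : Euc d) :
    DR d l y = (1 - 1 / ‖y‖) • y + (y 0 / ‖y‖ - (1 - 1 / ‖y‖) * y 0) • e d 0 + l • e d 1 := by
  ext i
  unfold DR e
  have hs : (∑ j ∈ Finset.univ.filter (fun j : Fin (d + 2) => 2 ≤ (j : ℕ)),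
      ((1 - 1 / ‖y‖) * y j) • (EuclideanSpace.single j (1:ℝ) : Euc d)) i =
      if 2 ≤ (i : ℕ) then (1 - 1 / ‖y‖) * y i else 0 := by
    rw [WithLp.ofLp_sum, Finset.sum_apply]
    simp [Finset.sum_ite, Finset.filter_filter, Pi.single_apply, Finset.sum_filter]
  simp only [PiLp.add_apply, hs, PiLp.smul_apply, smul_eq_mul, PiLp.single_apply]
  by_cases h0 : i = 0
  · subst h0; simp
  · by_cases h1 : i = 1
    · subst h1; simp
    · have : 2 ≤ (i : ℕ) := by
        have a0 : (i : ℕ) ≠ 0 := fun h => h0 (Fin.ext (by simpa using h))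
        have a1 : (i : ℕ) ≠ 1 := fun h => h1 (Fin.ext (by simpa using h))
        omega
      simp [h0, h1, this]

lemma inner_e (d : ℕ) (y : Euc d) (j : Fin (d + 2)) : inner ℝ y (e d j) = y j := by
  unfold e
  simp [EuclideanSpace.inner_single_right]

lemma norm_e (d : ℕ) (j : Fin (d + 2)) : ‖e d j‖ = 1 := by
  unfold e; simp

lemma sq_norm_sub (d : ℕ) (y : Euc d) (b : ℝ) (j : Fin (d + 2)) :
    ‖y - b • e d j‖ ^ 2 = ‖y‖ ^ 2 - 2 * b * y j + b ^ 2 := by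
  rw [norm_sub_sq_real, inner_smul_right, inner_e, norm_smul, norm_e]
  simp; ring

lemma coords_le (d : ℕ) (y : Euc d) : y 0 ^ 2 + y 1 ^ 2 ≤ ‖y‖ ^ 2 := by
  rw [EuclideanSpace.real_norm_sq_eq]
  rw [Fin.sum_univ_succ, Fin.sum_univ_succ]
  have : 0 ≤ ∑ i : Fin d, (y i.succ.succ) ^ 2 := Finset.sum_nonneg fun _ _ => sq_nonneg _
  simp only [Fin.succ_zero_eq_one]
  linarith

lemma F_aux {l s : ℝ} (h : 0 < s) (h' : s ≤ 1) (N : ℝ) :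
    1 / 2 * N - l * Real.log (1 + √(1 - s ^ 2)) + l * √(1 - s ^ 2) + (l - 1) * Real.log s =
    (N - s ^ 2) / 2 + Gf l (√(1 - s ^ 2)) := by
  unfold Gf
  rw [Real.sq_sqrt (by nlinarith), show 1 - (1 - s ^ 2) = s ^ 2 by ring, Real.log_pow]
  push_cast
  ring

lemma F_eq (d : ℕ) (l : ℝ) (y : Euc d) (h : 0 < y 0) (h' : y 0 ≤ 1) :
    F d l y = (‖y‖ ^ 2 - 2 * l * y 1 + l ^ 2 - y 0 ^ 2) / 2 + Gf l (√(1 - y 0 ^ 2)) := by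
  unfold F
  rw [F_aux h h', sq_norm_sub]

lemma DR_zero (d : ℕ) (l : ℝ) (y : Euc d) : DR d l y 0 = y 0 / ‖y‖ := by
  rw [DR_apply]; simp [e]

lemma abs_coord_le (d : ℕ) (y : Euc d) : y 0 ≤ ‖y‖ := by
  have := coords_le d y
  apply le_of_sq_le_sq _ (norm_nonneg y)
  nlinarith [sq_nonneg (y 1)]

lemma DR_mem (d : ℕ) (l : ℝ) (y : Euc d) (h : 0 < y 0) : 0 < DR d l y 0 ∧ DR d l y 0 ≤ 1 := by
  have := abs_coord_le d y
  rw [DR_zero]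
  exact ⟨div_pos h (by linarith), (div_le_one (by linarith)).2 this⟩

lemma F_DR (d : ℕ) (l : ℝ) (y : Euc d) (h : 0 < y 0) :
    F d l (DR d l y) = (1 - 1 / ‖y‖) ^ 2 * (‖y‖ ^ 2 - y 0 ^ 2) / 2
      + Gf l (√(1 - (y 0 / ‖y‖) ^ 2)) := by
  have hm := DR_mem d l y h
  have hr := abs_coord_le d y
  unfold F
  rw [F_aux hm.1 hm.2, DR_zero]
  have : DR d l y - l • e d 1 =
      (1 - 1 / ‖y‖) • y - ((1 - 1 / ‖y‖) * y 0 - y 0 / ‖y‖) • e d 0 := by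
    rw [DR_apply]; module
  rw [this, sq_norm_sub, norm_smul, mul_pow, Real.norm_eq_abs, sq_abs]
  simp only [PiLp.smul_apply, smul_eq_mul]
  ring

lemma decrease_eq (d : ℕ) (l : ℝ) (y : Euc d) (h : 0 < y 0) (h' : y 0 ≤ 1) :
    F d l y - F d l (DR d l y) =
      (√(1 - (y 0 / ‖y‖) ^ 2) - l) ^ 2 / 2 + Wf l (√(1 - (y 0 / ‖y‖) ^ 2)) (√(1 - y 0 ^ 2))
      + l * (‖y‖ * √(1 - (y 0 / ‖y‖) ^ 2) - y 1) := by
  rw [F_DR d l y h, F_eq d l y h h']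
  have hr := abs_coord_le d y
  have hr0 : 0 < ‖y‖ := by linarith
  have hle : (y 0 / ‖y‖) ≤ 1 := (div_le_one hr0).2 hr
  have hp : 0 < y 0 / ‖y‖ := div_pos h hr0
  unfold Wf kf
  have s2 : (√(1 - (y 0 / ‖y‖) ^ 2)) ^ 2 = 1 - (y 0 / ‖y‖) ^ 2 := Real.sq_sqrt (by nlinarith)
  have c2 : (√(1 - (y 0) ^ 2)) ^ 2 = 1 - (y 0) ^ 2 := Real.sq_sqrt (by nlinarith)
  rw [s2, c2, show 1 - (1 - (y 0 / ‖y‖) ^ 2) = (y 0 / ‖y‖) ^ 2 by ring, Real.sqrt_sq hp.le,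
    show 1 - (1 - (y 0) ^ 2) = (y 0) ^ 2 by ring, Real.sqrt_sq h.le]
  generalize Gf l √(1 - y 0 ^ 2) = G1
  generalize Gf l √(1 - (y 0 / ‖y‖) ^ 2) = G2
  generalize √(1 - (y 0 / ‖y‖) ^ 2) = σ at *
  generalize ‖y‖ = r at *
  generalize y 0 = s at *
  have hs : s ^ 2 = r ^ 2 * (1 - σ ^ 2) := by
    rw [s2]; field_simp; ring
  have e1 : σ / (s / r) * (σ - l) * (s - s / r) = σ * (σ - l) * (r - 1) := by
    field_simp
  have e2 : (1 - 1 / r) ^ 2 * (r ^ 2 - s ^ 2) = (r - 1) ^ 2 * σ ^ 2 := by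
    rw [hs]; field_simp; ring
  rw [e1, e2, hs]
  ring

lemma xStar_zero (d : ℕ) (l : ℝ) : xStar d l 0 = √(1 - l ^ 2) := by simp [xStar, e]
lemma xStar_one (d : ℕ) (l : ℝ) : xStar d l 1 = l := by simp [xStar, e]

lemma xStar_norm (d : ℕ) {l : ℝ} (h0 : 0 ≤ l) (h1 : l < 1) : ‖xStar d l‖ = 1 := by
  have h2 := one_sub_sq_pos h0 h1
  have : ‖xStar d l‖ ^ 2 = 1 := by
    have : xStar d l = √(1 - l ^ 2) • e d 0 - (-l) • e d 1 := by unfold xStar; module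
    rw [this, sq_norm_sub, norm_smul, norm_e]
    have h3 := Real.sq_sqrt h2.le
    simp [e, h3]
  have h4 := norm_nonneg (xStar d l)
  nlinarith

lemma DR_xStar (d : ℕ) {l : ℝ} (h0 : 0 ≤ l) (h1 : l < 1) : DR d l (xStar d l) = xStar d l := by
  rw [DR_apply, xStar_norm d h0 h1, xStar_zero]
  unfold xStar
  simp

lemma xStar_pos (d : ℕ) {l : ℝ} (h0 : 0 ≤ l) (h1 : l < 1) :
    0 < xStar d l 0 ∧ xStar d l 0 ≤ 1 := by
  rw [xStar_zero]
  exact ⟨Real.sqrt_pos.2 (one_sub_sq_pos h0 h1), Real.sqrt_le_one.2 (by nlinarith)⟩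

lemma F_xStar (d : ℕ) {l : ℝ} (h0 : 0 ≤ l) (h1 : l < 1) : F d l (xStar d l) = Gf l l := by
  obtain ⟨a, b⟩ := xStar_pos d h0 h1
  rw [F_eq d l _ a b, xStar_norm d h0 h1, xStar_zero, xStar_one,
    Real.sq_sqrt (one_sub_sq_pos h0 h1).le, show 1 - (1 - l ^ 2) = l ^ 2 by ring, Real.sqrt_sq h0]
  ring

lemma decrease (d : ℕ) {l : ℝ} (h0 : 0 ≤ l) (h1 : l < 1) (y : Euc d) (h : 0 < y 0)
    (h' : y 0 ≤ 1) : 0 ≤ F d l y - F d l (DR d l y) ∧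
      (F d l y - F d l (DR d l y) = 0 → F d l y = F d l (xStar d l)) := by
  have hr := abs_coord_le d y
  have hr0 : 0 < ‖y‖ := by linarith
  have hle : (y 0 / ‖y‖) ≤ 1 := (div_le_one hr0).2 hr
  have hp : 0 < y 0 / ‖y‖ := div_pos h hr0
  have hσ2 : (√(1 - (y 0 / ‖y‖) ^ 2)) ^ 2 = 1 - (y 0 / ‖y‖) ^ 2 := Real.sq_sqrt (by nlinarith)
  have hC2 : (√(1 - (y 0) ^ 2)) ^ 2 = 1 - (y 0) ^ 2 := Real.sq_sqrt (by nlinarith)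
  have hσ0 := Real.sqrt_nonneg (1 - (y 0 / ‖y‖) ^ 2)
  have hC0 := Real.sqrt_nonneg (1 - (y 0) ^ 2)
  have hy1 : y 1 ≤ ‖y‖ * √(1 - (y 0 / ‖y‖) ^ 2) := by
    apply le_of_sq_le_sq _ (by positivity)
    rw [mul_pow, hσ2]
    have := coords_le d y
    have e1 : ‖y‖ ^ 2 * (1 - (y 0 / ‖y‖) ^ 2) = ‖y‖ ^ 2 - y 0 ^ 2 := by field_simp
    linarith
  have hl : 0 ≤ l * (‖y‖ * √(1 - (y 0 / ‖y‖) ^ 2) - y 1) := mul_nonneg h0 (by linarith)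
  have hc := core h0 h1 hσ0 (by nlinarith) hC0 (by nlinarith)
  have hde := decrease_eq d l y h h'
  rcases hc with hc | ⟨hσ, hC⟩
  · exact ⟨by linarith, fun hh => by linarith⟩
  · rw [hσ, hC, W_self] at hde
    rw [hσ] at hl hσ2
    refine ⟨by rw [hde]; linarith, fun hh => ?_⟩
    rw [hC] at hC2
    have hrr : ‖y‖ = 1 := by
      have : (y 0 / ‖y‖) ^ 2 = y 0 ^ 2 := by linarith
      rw [div_pow, div_eq_iff (by positivity)] at this
      have h5 : ‖y‖ ^ 2 = 1 := by
        have := mul_left_cancel₀ (show y 0 ^ 2 ≠ 0 by positivity) (this.symm.trans (mul_one _).symm)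
        exact this
      nlinarith
    have hz : l * (‖y‖ * l - y 1) = 0 := by linarith
    rw [F_xStar d h0 h1, F_eq d l y h h', hC, hrr]
    rw [hrr] at hz
    nlinarith

lemma F_lower (d : ℕ) {l : ℝ} (h0 : 0 ≤ l) (h1 : l < 1) (y : Euc d) (h : 0 < y 0)
    (h' : y 0 ≤ 1) : 1 / 2 * ‖y - l • e d 1‖ ^ 2 + (1 - l) * (- Real.log (y 0)) - Real.log 2
      ≤ F d l y := by
  unfold F
  have a1 := Real.sqrt_nonneg (1 - y 0 ^ 2)
  have a2 : √(1 - y 0 ^ 2) ≤ 1 := Real.sqrt_le_one.2 (by nlinarith)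
  have a3 : Real.log (1 + √(1 - y 0 ^ 2)) ≤ Real.log 2 :=
    Real.log_le_log (by linarith) (by linarith)
  have a4 : 0 ≤ Real.log 2 := Real.log_nonneg (by norm_num)
  have a5 : l * Real.log (1 + √(1 - y 0 ^ 2)) ≤ Real.log 2 := by nlinarith
  have a6 := mul_nonneg h0 a1
  linarith

lemma cont_coord (d : ℕ) (j : Fin (d + 2)) : Continuous (fun y : Euc d => y j) := by fun_prop

lemma F_cont (d : ℕ) (l : ℝ) : ContinuousOn (F d l) (Hplus d) := by
  intro y hy
  have hy : 0 < y 0 := hy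
  apply ContinuousAt.continuousWithinAt
  have hc := (cont_coord d 0).continuousAt (x := y)
  unfold F
  have hs : ContinuousAt (fun x : Euc d => √(1 - x 0 ^ 2)) y := by fun_prop
  have h1 : ContinuousAt (fun x : Euc d => Real.log (1 + √(1 - x 0 ^ 2))) y := by
    apply ContinuousAt.log (by fun_prop)
    have := Real.sqrt_nonneg (1 - y 0 ^ 2)
    linarith
  have h2 : ContinuousAt (fun x : Euc d => Real.log (x 0)) y := hc.log hy.ne'
  have h3 : ContinuousAt (fun x : Euc d => ‖x - l • e d 1‖ ^ 2) y := by fun_prop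
  fun_prop

lemma DR_cont (d : ℕ) (l : ℝ) : ContinuousOn (DR d l) (Hplus d) := by
  intro y hy
  have hy : 0 < y 0 := hy
  apply ContinuousAt.continuousWithinAt
  have hc := (cont_coord d 0).continuousAt (x := y)
  have hr := abs_coord_le d y
  have hn : ‖y‖ ≠ 0 := by linarith
  have : DR d l = fun y => (1 - 1 / ‖y‖) • y + (y 0 / ‖y‖ - (1 - 1 / ‖y‖) * y 0) • e d 0 + l • e d 1 :=
    funext (DR_apply d l)
  rw [this]
  have h1 : ContinuousAt (fun x : Euc d => 1 / ‖x‖) y := by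
    apply ContinuousAt.div (by fun_prop) (by fun_prop) hn
  have h2 : ContinuousAt (fun x : Euc d => x 0 / ‖x‖) y := by
    apply ContinuousAt.div (by fun_prop) (by fun_prop) hn
  fun_prop

lemma inf_pos (d : ℕ) {l : ℝ} (h0 : 0 ≤ l) (h1 : l < 1) (t : ℝ) (ht : 0 < t) :
    ∃ m > 0, ∀ y ∈ Delta d, m ≤ F d l y - F d l (DR d l y) + |F d l y - F d l (xStar d l) - t| := by
  set M := F d l (xStar d l) + t + 1 with hM
  set ε := Real.exp (-((M + Real.log 2) / (1 - l))) with hε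
  have hε0 : 0 < ε := Real.exp_pos _
  set K : Set (Euc d) := {y | ε ≤ y 0 ∧ y 0 ≤ 1 ∧ ‖y - l • e d 1‖ ^ 2 ≤ 2 * (M + Real.log 2)} with hK
  have hmem : ∀ y ∈ Delta d, F d l y ≤ M → y ∈ K := by
    rintro y ⟨hy, hy'⟩ hF
    have hlow := F_lower d h0 h1 y hy hy'
    have hlog : 0 ≤ - Real.log (y 0) := by have := Real.log_nonpos hy.le hy'; linarith
    refine ⟨?_, hy', ?_⟩
    · rw [hε, ← Real.le_log_iff_exp_le hy, neg_le, le_div_iff₀ (by linarith)]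
      nlinarith [sq_nonneg ‖y - l • e d 1‖]
    · nlinarith [mul_nonneg (show 0 ≤ 1 - l by linarith) hlog]
  have hcpt : IsCompact K := by
    apply Metric.isCompact_of_isClosed_isBounded
    · have hc := cont_coord d 0
      apply (isClosed_le continuous_const hc).inter
      apply (isClosed_le hc continuous_const).inter
      have hn : Continuous (fun y : Euc d => ‖y - l • e d 1‖ ^ 2) := by fun_prop
      exact isClosed_le hn continuous_const
    · apply (Metric.isBounded_closedBall (x := l • e d 1) (r := √(2 * (M + Real.log 2)))).subset
      intro y hy
      rw [mem_closedBall, dist_eq_norm]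
      exact Real.le_sqrt_of_sq_le hy.2.2
  have hne : K.Nonempty := ⟨xStar d l, hmem _ (xStar_pos d h0 h1) (by linarith)⟩
  have hKH : K ⊆ Hplus d := fun y hy => lt_of_lt_of_le hε0 hy.1
  have hcont : ContinuousOn
      (fun y => F d l y - F d l (DR d l y) + |F d l y - F d l (xStar d l) - t|) K := by
    have c1 := (F_cont d l).mono hKH
    have c2 : ContinuousOn (fun y => F d l (DR d l y)) K :=
      (F_cont d l).comp ((DR_cont d l).mono hKH) (fun y hy => (DR_mem d l y (hKH hy)).1)
    exact (c1.sub c2).add ((c1.sub continuousOn_const).sub continuousOn_const).abs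
  obtain ⟨z, hz, hmin⟩ := hcpt.exists_isMinOn hne hcont
  obtain ⟨hd1, hd2⟩ := decrease d h0 h1 z (hKH hz) hz.2.1
  have hpos : 0 < F d l z - F d l (DR d l z) + |F d l z - F d l (xStar d l) - t| := by
    rcases hd1.lt_or_eq with hlt | heq
    · have := abs_nonneg (F d l z - F d l (xStar d l) - t); linarith
    · have := hd2 heq.symm
      rw [← heq, this]
      simp; linarith
  refine ⟨min 1 _, lt_min one_pos hpos, ?_⟩
  intro y hy
  by_cases hF : F d l y ≤ M
  · exact (min_le_right _ _).trans (hmin (hmem y hy hF))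
  · push Not at hF
    refine (min_le_left _ _).trans ?_
    have h3 := (decrease d h0 h1 y hy.1 hy.2).1
    have h4 := le_abs_self (F d l y - F d l (xStar d l) - t)
    linarith

/-- For `λ ∈ [0,1)` there is a continuous positive definite
`α : [0,∞) → [0,∞)` such that `V(T x) ≤ V(x) − α(V(x))` for every `x ∈ H₊`. -/
theorem stmt11 (d : ℕ) (lam : ℝ) (h0 : 0 ≤ lam) (h1 : lam < 1) :
    ∃ a : ℝ → ℝ,
      ContinuousOn a (Ici 0) ∧
      (∀ t : ℝ, 0 ≤ t → 0 ≤ a t) ∧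
      (∀ t : ℝ, 0 ≤ t → (a t = 0 ↔ t = 0)) ∧
      ∀ x ∈ Hplus d, V d lam (DR d lam x) ≤ V d lam x - a (V d lam x) := by
  classical
  let f : Euc d → ℝ → ℝ := fun y t =>
    F d lam y - F d lam (DR d lam y) + |F d lam y - F d lam (xStar d lam) - t|
  let a : ℝ → ℝ := fun t => ⨅ y : Delta d, f y t
  have hx := xStar_pos d h0 h1
  haveI : Nonempty (Delta d) := ⟨⟨xStar d lam, hx⟩⟩
  have hf0 : ∀ (t : ℝ) (y : Delta d), 0 ≤ f y t := fun t y =>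
    add_nonneg (decrease d h0 h1 y y.2.1 y.2.2).1 (abs_nonneg _)
  have hbdd : ∀ t, BddBelow (range fun y : Delta d => f y t) := by
    intro t
    refine ⟨0, ?_⟩
    rintro _ ⟨y, rfl⟩
    exact hf0 t y
  have hle : ∀ t (y : Delta d), a t ≤ f y t := fun t y => ciInf_le (hbdd t) y
  have ha0 : ∀ t, 0 ≤ a t := fun t => le_ciInf (hf0 t)
  have hlip : ∀ s t, a s ≤ a t + |s - t| := by
    intro s t
    rw [← sub_le_iff_le_add]
    apply le_ciInf
    intro y
    have h2 := hle s y
    have h3 : f y s ≤ f y t + |s - t| := by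
      have := abs_sub_le (F d lam y - F d lam (xStar d lam)) t s
      have h4 := abs_sub_comm s t
      simp only [f]
      linarith
    linarith
  have hL : LipschitzWith 1 a := by
    apply LipschitzWith.of_le_add
    intro s t
    rw [Real.dist_eq]
    exact hlip s t
  refine ⟨a, hL.continuous.continuousOn, fun t _ => ha0 t, ?_, ?_⟩
  · intro t ht
    constructor
    · intro hat
      by_contra hne
      obtain ⟨m, hm, hm'⟩ := inf_pos d h0 h1 t (lt_of_le_of_ne ht (Ne.symm hne))
      have : m ≤ a t := le_ciInf fun y => hm' y y.2
      linarith
    · rintro rfl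
      apply le_antisymm _ (ha0 0)
      have := hle 0 ⟨xStar d lam, hx⟩
      simp only [f, DR_xStar d h0 h1] at this
      simpa using this
  · intro x hxH
    have hm := DR_mem d lam x hxH
    have := hle (V d lam x) ⟨DR d lam x, hm⟩
    simp only [f] at this
    rw [show F d lam (DR d lam x) - F d lam (xStar d lam) - V d lam x = 0 by unfold V; ring,
      abs_zero] at this
    have e1 : V d lam (DR d lam x) = V d lam x -
      (F d lam (DR d lam x) - F d lam (DR d lam (DR d lam x))) := by unfold V; ring
    linarith
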